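/- arXiv:2009.03044 — 4 statements merged into one kernel-verified Lean document; each statement's English description precedes it below -/
import Mathlib

section
/- Let n ≥ 2 and let E ⊂ ℝⁿ be a compact set which is the closure of its interior and whose topological boundary ∂E is a compact C^∞ (n−1)-dimensional embedded submanifold of ℝⁿ. Then for every continuously differentiable compactly supported vector field U : ℝⁿ → ℝⁿ with ‖U(x)‖ ≤ 1 for all x, one has ∫_E div U(x) dx ≤ μH^{n−1}(∂E); consequently TV(χ_E) ≤ μH^{n−1}(∂E). -/
open MeasureTheory
open scoped ENNReal

/-- The divergence `div U x = ∑ i ∂Uᵢ/∂xᵢ (x)` of a vector field on `ℝⁿ`. -/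
noncomputable def vecDiv {n : ℕ} (U : EuclideanSpace ℝ (Fin n) → EuclideanSpace ℝ (Fin n))
    (x : EuclideanSpace ℝ (Fin n)) : ℝ :=
  ∑ i, (inner ℝ (fderiv ℝ U x (EuclideanSpace.single i 1)) (EuclideanSpace.single i (1 : ℝ)) : ℝ)

/-- The total variation of `f : ℝⁿ → ℝ`, defined via the dual (sup-based) formula over
continuously differentiable, compactly supported test vector fields bounded by `1`. -/
noncomputable def totalVariation {n : ℕ} (f : EuclideanSpace ℝ (Fin n) → ℝ) : ℝ≥0∞ :=
  ⨆ U : {U : EuclideanSpace ℝ (Fin n) → EuclideanSpace ℝ (Fin n) //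
      ContDiff ℝ 1 U ∧ HasCompactSupport U ∧ ∀ x, ‖U x‖ ≤ 1},
    ENNReal.ofReal (∫ x, f x * vecDiv U.1 x)

/-- `S` is a compact `C^∞` embedded hypersurface ((n−1)-dimensional submanifold) of `ℝⁿ`. -/
def IsSmoothCompactHypersurface {n : ℕ} (S : Set (EuclideanSpace ℝ (Fin n))) : Prop :=
  IsCompact S ∧
  ∀ x ∈ S, ∃ (g : EuclideanSpace ℝ (Fin n) → ℝ) (u : Set (EuclideanSpace ℝ (Fin n))),
    IsOpen u ∧ x ∈ u ∧ ContDiff ℝ (⊤ : ℕ∞) g ∧ (∀ y ∈ u, fderiv ℝ g y ≠ 0) ∧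
    S ∩ u = {y ∈ u | g y = 0}


/-- Orthonormal coordinates whose first axis is a given unit vector. -/
lemma exists_coord {m : ℕ} (ν : EuclideanSpace ℝ (Fin (m + 1))) (hν : ‖ν‖ = 1) :
    ∃ Ψ : (ℝ × (Fin m → ℝ)) ≃ᵐ EuclideanSpace ℝ (Fin (m + 1)),
      MeasurePreserving Ψ ∧ (∀ t y, Ψ (t, y) = Ψ (0, y) + t • ν) ∧
      LipschitzWith 1 (fun x => (Ψ.symm x).2) := by
  have hc : Module.finrank ℝ (EuclideanSpace ℝ (Fin (m + 1))) = Fintype.card (Fin (m + 1)) := by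
    simp
  have ho : Orthonormal ℝ (({0} : Set (Fin (m + 1))).domRestrict fun _ => ν) := by
    constructor
    · intro i; simpa using hν
    · intro i j hij
      exact absurd (Subsingleton.elim i j) hij
  obtain ⟨b, hb⟩ := ho.exists_orthonormalBasis_extension_of_card_eq hc
  have hb0 : b 0 = ν := hb 0 rfl
  let e1 := (MeasurableEquiv.piFinSuccAbove (fun _ : Fin (m + 1) => ℝ) 0).symm
  let e2 := MeasurableEquiv.toLp 2 (Fin (m + 1) → ℝ)
  let e3 := b.repr.symm.toHomeomorph.toMeasurableEquiv
  refine ⟨(e1.trans e2).trans e3, ?_, ?_, ?_⟩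
  · have h1 : MeasurePreserving e1 :=
      (volume_preserving_piFinSuccAbove (fun _ : Fin (m + 1) => ℝ) 0).symm _
    have h2 : MeasurePreserving e2 := PiLp.volume_preserving_toLp (Fin (m + 1))
    have h3 : MeasurePreserving e3 := b.repr.symm.measurePreserving
    exact h3.comp (h2.comp h1)
  · intro t y
    have key : ∀ t : ℝ, ((e1.trans e2).trans e3) (t, y)
        = b.repr.symm (WithLp.toLp 2 (Fin.cons t y : Fin (m + 1) → ℝ)) := by
      intro t
      rw [← Fin.insertNth_zero']
      rfl
    rw [key, key, ← hb0, ← b.repr_symm_single, ← map_smul, ← map_add]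
    congr 1
    ext i
    refine Fin.cases ?_ (fun j => ?_) i <;> simp
  · refine LipschitzWith.of_dist_le_mul fun x z => ?_
    have key : ∀ x, ((((e1.trans e2).trans e3).symm x).2)
        = fun j : Fin m => (b.repr x) j.succ := by
      intro x; rfl
    simp only [key, NNReal.coe_one, one_mul]
    rw [dist_pi_le_iff dist_nonneg]
    intro j
    calc dist ((b.repr x) j.succ) ((b.repr z) j.succ) = ‖(b.repr x - b.repr z) j.succ‖ := by
          simp [dist_eq_norm]
      _ ≤ ‖b.repr x - b.repr z‖ := PiLp.norm_apply_le _ _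
      _ = dist x z := by rw [← map_sub, LinearIsometryEquiv.norm_map, dist_eq_norm]

/-- Lebesgue measure is at most the (unnormalised) Hausdorff measure. -/
lemma volume_le_hausdorff {n : ℕ} (s : Set (EuclideanSpace ℝ (Fin n))) :
    volume s ≤ μH[(n : ℝ)] s := by
  have h1 : volume s = volume ((MeasurableEquiv.toLp 2 (Fin n → ℝ)).symm '' s) := by
    rw [← (EuclideanSpace.volume_preserving_symm_measurableEquiv_toLp (Fin n)).measure_preimage_equiv,
      Set.preimage_image_eq _ (MeasurableEquiv.injective _)]
  have hL : LipschitzWith 1 ((MeasurableEquiv.toLp 2 (Fin n → ℝ)).symm) :=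
    PiLp.lipschitzWith_ofLp 2 (fun _ : Fin n => ℝ)
  rw [h1, ← hausdorffMeasure_pi_real]
  have := hL.hausdorffMeasure_image_le (d := (n : ℝ)) (by positivity) s
  simpa using this

/-- Fibre computation. -/
lemma fibre_eq {f G : ℝ → ℝ} {T : Set ℝ} (hf : ContDiff ℝ 1 f) (hfc : HasCompactSupport f)
    (hG : StrictMonoOn G T)
    (hd : ∀ t ∉ T, deriv f t = 0) {τ : ℝ} (hτ : τ ∈ T) (h0 : G τ = 0) :
    ∫ t, {t | 0 < G t}.indicator (deriv f) t = - f τ := by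
  rw [← hfc.integral_Ioi_deriv_eq hf τ, ← integral_indicator measurableSet_Ioi]
  congr 1
  ext t
  by_cases ht : t ∈ T
  · have : 0 < G t ↔ τ < t := by rw [← h0]; exact hG.lt_iff_lt hτ ht
    simp [Set.indicator, this]
  · simp [Set.indicator, hd t ht]

lemma integral_deriv_zero {f : ℝ → ℝ} (hf : ContDiff ℝ 1 f) (hfc : HasCompactSupport f) :
    ∫ t, deriv f t = 0 :=
  integral_eq_zero_of_hasDerivAt_of_integrable
    (fun x => (hf.differentiable one_ne_zero x).hasDerivAt)
    ((hf.continuous_deriv le_rfl).integrable_of_hasCompactSupport hfc.deriv)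
    (hf.continuous.integrable_of_hasCompactSupport hfc)

lemma fibre_zero {f G : ℝ → ℝ} {T : Set ℝ} (hf : ContDiff ℝ 1 f) (hfc : HasCompactSupport f)
    (hT : T.OrdConnected) (hG : ContinuousOn G T)
    (hd : ∀ t ∉ T, deriv f t = 0) (h0 : ∀ τ ∈ T, G τ ≠ 0) :
    ∫ t, {t | 0 < G t}.indicator (deriv f) t = 0 := by
  by_cases hpos : ∃ t ∈ T, 0 < G t
  · obtain ⟨a, ha, hGa⟩ := hpos
    have hall : ∀ t ∈ T, 0 < G t := by
      intro t ht
      by_contra hcon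
      have hpc : IsPreconnected T := hT.isPreconnected
      have := hpc.intermediate_value ht ha hG
      obtain ⟨c, hc, hc0⟩ := this ⟨not_lt.1 hcon, hGa.le⟩
      exact h0 c hc hc0
    refine Eq.trans ?_ (integral_deriv_zero hf hfc)
    congr 1
    ext t
    by_cases ht : t ∈ T
    · simp [Set.indicator, hall t ht]
    · simp [Set.indicator, hd t ht]
  · push Not at hpos
    refine Eq.trans ?_ (integral_zero ℝ ℝ (μ := volume))
    congr 1
    ext t
    by_cases ht : t ∈ T
    · simp [Set.indicator, (hpos t ht).not_gt]
    · simp [Set.indicator, hd t ht]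

lemma layer_le {m : ℕ} {η g : EuclideanSpace ℝ (Fin (m + 1)) → ℝ}
    {W : Set (EuclideanSpace ℝ (Fin (m + 1)))} {ν : EuclideanSpace ℝ (Fin (m + 1))}
    (hν : ‖ν‖ = 1) (hη : ContDiff ℝ 1 η) (hηc : HasCompactSupport η) (hη0 : ∀ x, 0 ≤ η x)
    (hW : Convex ℝ W) (hWo : IsOpen W) (hηW : tsupport η ⊆ W) (hg : Continuous g)
    (hmono : ∀ x ∈ W, ∀ s : ℝ, 0 < s → x + s • ν ∈ W → g x < g (x + s • ν)) :
    ENNReal.ofReal (-∫ x, {x | 0 < g x}.indicator (fun x => fderiv ℝ η x ν) x)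
      ≤ ∫⁻ x in {x ∈ W | g x = 0}, ENNReal.ofReal (η x) ∂μH[(m : ℝ)] := by
  obtain ⟨Ψ, hΨ, hΨt, hL⟩ := exists_coord ν hν
  have hdc : Continuous fun x => fderiv ℝ η x ν :=
    (hη.continuous_fderiv one_ne_zero).clm_apply continuous_const
  have hdcs : HasCompactSupport fun x => fderiv ℝ η x ν := by
    refine HasCompactSupport.intro hηc.isCompact fun x hx => ?_
    rw [fderiv_of_notMem_tsupport ℝ hx]; rfl
  have hgm : MeasurableSet {x | 0 < g x} := (isOpen_lt continuous_const hg).measurableSet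
  set D := {x | 0 < g x}.indicator (fun x => fderiv ℝ η x ν) with hD
  have hDi : Integrable D := (hdc.integrable_of_hasCompactSupport hdcs).indicator hgm
  have hDm : Measurable D := hdc.measurable.indicator hgm
  have hDΨ : Integrable (fun p => D (Ψ p)) :=
    hΨ.integrable_comp_of_integrable hDi
  set k : (Fin m → ℝ) → ℝ := fun y => -∫ t, D (Ψ (t, y)) with hk
  have hDk : -∫ x, D x = ∫ y, k y := by
    rw [← hΨ.integral_comp' D, Measure.volume_eq_prod, integral_prod_symm _ hDΨ, hk, integral_neg]
  have hkm : Measurable k := by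
    have : StronglyMeasurable (fun p : ℝ × (Fin m → ℝ) => D (Ψ p)) :=
      (hDm.comp Ψ.measurable).stronglyMeasurable
    exact (this.integral_prod_left').measurable.neg
  have hfib : ∀ y : Fin m → ℝ,
      (∀ τ : ℝ, Ψ (τ, y) ∈ W → g (Ψ (τ, y)) = 0 → k y = η (Ψ (τ, y))) ∧
      ((∀ τ : ℝ, Ψ (τ, y) ∈ W → g (Ψ (τ, y)) ≠ 0) → k y = 0) := by
    intro y
    set γ : ℝ → EuclideanSpace ℝ (Fin (m + 1)) := fun t => Ψ (0, y) + t • ν with hγ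
    have hγΨ : ∀ t, Ψ (t, y) = γ t := fun t => hΨt t y
    have hγd : ∀ t, HasDerivAt γ ν t := by
      intro t
      have := ((hasDerivAt_id t).smul_const ν).const_add (Ψ (0, y))
      simpa [hγ] using this
    have hγi : Isometry γ := by
      refine Isometry.of_dist_eq fun a b => ?_
      have e : γ a - γ b = (a - b) • ν := by simp only [hγ]; module
      rw [dist_eq_norm, e, norm_smul, hν, mul_one, dist_eq_norm]
    have hγc : ContDiff ℝ 1 γ := by
      simp only [hγ]; fun_prop
    set f : ℝ → ℝ := fun t => η (γ t) with hf
    have hfc : ContDiff ℝ 1 f := hη.comp hγc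
    have hfs : HasCompactSupport f := hηc.comp_isClosedEmbedding hγi.isClosedEmbedding
    have hfd : ∀ t, deriv f t = fderiv ℝ η (γ t) ν := by
      intro t
      exact ((hη.differentiable one_ne_zero (γ t)).hasFDerivAt.comp_hasDerivAt t (hγd t)).deriv
    set T : Set ℝ := {t | γ t ∈ W} with hT
    have hTo : T.OrdConnected := by
      have : Convex ℝ T := by
        intro a ha b hb p q hp hq hpq
        have h := hW ha hb hp hq hpq
        have e : γ (p • a + q • b) = p • γ a + q • γ b := by
          have h1 : Ψ (0, y) = p • Ψ (0, y) + q • Ψ (0, y) := by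
            rw [← add_smul, hpq, one_smul]
          simp only [hγ, smul_eq_mul]
          conv_lhs => rw [h1]
          module
        change γ (p • a + q • b) ∈ W
        rw [e]; exact h
      exact this.ordConnected
    have hd : ∀ t ∉ T, deriv f t = 0 := by
      intro t ht
      rw [hfd, fderiv_of_notMem_tsupport ℝ (fun h => ht (hηW h))]; rfl
    have hky : k y = -∫ t, {t | 0 < g (γ t)}.indicator (deriv f) t := by
      simp only [hk, hD]
      congr 2
      ext t
      simp only [Set.indicator, hγΨ, hfd, Set.mem_ofPred_eq]
    have hGm : StrictMonoOn (fun t => g (γ t)) T := by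
      intro a ha b hb hab
      have e : γ b = γ a + (b - a) • ν := by simp only [hγ]; module
      have := hmono (γ a) ha (b - a) (sub_pos.2 hab) (by rw [← e]; exact hb)
      rw [← e] at this
      exact this
    refine ⟨fun τ hτ h0 => ?_, fun h => ?_⟩
    · rw [hγΨ] at hτ h0 ⊢
      rw [hky, fibre_eq (G := fun t => g (γ t)) hfc hfs hGm hd hτ h0, neg_neg]
    · rw [hky, fibre_zero (G := fun t => g (γ t)) hfc hfs hTo
        (hg.comp hγc.continuous).continuousOn hd (fun τ hτ => ?_), neg_zero]
      have := h τ (by rw [hγΨ]; exact hτ)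
      rwa [hγΨ] at this
  have hk0 : ∀ y, 0 ≤ k y := by
    intro y
    by_cases h : ∃ τ : ℝ, Ψ (τ, y) ∈ W ∧ g (Ψ (τ, y)) = 0
    · obtain ⟨τ, h1, h2⟩ := h
      rw [(hfib y).1 τ h1 h2]; exact hη0 _
    · push Not at h
      rw [(hfib y).2 h]
  have hki : Integrable k := by
    have h2 : Integrable (fun p => D (Ψ p)) ((volume : Measure ℝ).prod (volume : Measure (Fin m → ℝ))) := hDΨ
    exact h2.integral_prod_right.neg
  rw [hDk, ofReal_integral_eq_lintegral_ofReal hki (ae_of_all _ hk0)]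
  set S := {x ∈ W | g x = 0} with hS
  have hSm : MeasurableSet S :=
    hWo.measurableSet.inter (isClosed_eq hg continuous_const).measurableSet
  set P : EuclideanSpace ℝ (Fin (m + 1)) → (Fin m → ℝ) := fun x => (Ψ.symm x).2 with hP
  set B : Set (Fin m → ℝ) := {y | k y ≠ 0} with hB
  have hBm : MeasurableSet B := hkm (measurableSet_singleton 0).compl
  have hle : volume.restrict B ≤ Measure.map P ((μH[(m : ℝ)]).restrict S) := by
    refine Measure.le_iff.2 fun C hC => ?_
    rw [Measure.restrict_apply hC, Measure.map_apply hL.continuous.measurable hC,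
      Measure.restrict_apply (hL.continuous.measurable hC)]
    have hsub : C ∩ B ⊆ P '' (P ⁻¹' C ∩ S) := by
      rintro y ⟨hyC, hyB⟩
      have : ∃ τ : ℝ, Ψ (τ, y) ∈ W ∧ g (Ψ (τ, y)) = 0 := by
        by_contra hcon
        push Not at hcon
        exact hyB ((hfib y).2 hcon)
      obtain ⟨τ, h1, h2⟩ := this
      have hPy : P (Ψ (τ, y)) = y := by simp [hP]
      exact ⟨Ψ (τ, y), ⟨by simpa [hPy] using hyC, h1, h2⟩, hPy⟩
    calc volume (C ∩ B) ≤ volume (P '' (P ⁻¹' C ∩ S)) := measure_mono hsub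
      _ = μH[(m : ℝ)] (P '' (P ⁻¹' C ∩ S)) := by rw [← hausdorffMeasure_pi_real]; simp
      _ ≤ μH[(m : ℝ)] (P ⁻¹' C ∩ S) := by
        simpa using hL.hausdorffMeasure_image_le (d := (m : ℝ)) (by positivity) (P ⁻¹' C ∩ S)
  calc ∫⁻ y, ENNReal.ofReal (k y) = ∫⁻ y in B, ENNReal.ofReal (k y) := by
        rw [← lintegral_indicator hBm]
        congr 1
        ext y
        by_cases h : k y = 0 <;> simp [Set.indicator, hB, h]
    _ ≤ ∫⁻ y, ENNReal.ofReal (k y) ∂(Measure.map P ((μH[(m : ℝ)]).restrict S)) :=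
        lintegral_mono' hle le_rfl
    _ ≤ ∫⁻ x in S, ENNReal.ofReal (k (P x)) ∂μH[(m : ℝ)] := lintegral_map_le _ _
    _ ≤ ∫⁻ x in S, ENNReal.ofReal (η x) ∂μH[(m : ℝ)] := by
        refine setLIntegral_mono' hSm fun x hx => ?_
        have e : Ψ ((Ψ.symm x).1, P x) = x := by simp [hP]
        rw [(hfib (P x)).1 (Ψ.symm x).1 (by rw [e]; exact hx.1) (by rw [e]; exact hx.2), e]

lemma vecDiv_eq {n : ℕ} {V : EuclideanSpace ℝ (Fin n) → EuclideanSpace ℝ (Fin n)}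
    (hV : ContDiff ℝ 1 V) (x : EuclideanSpace ℝ (Fin n)) :
    vecDiv V x = ∑ i, fderiv ℝ (fun x => V x i) x (EuclideanSpace.single i 1) := by
  unfold vecDiv
  refine Finset.sum_congr rfl fun i _ => ?_
  have h : HasFDerivAt (fun x => V x i)
      ((EuclideanSpace.proj i : EuclideanSpace ℝ (Fin n) →L[ℝ] ℝ).comp (fderiv ℝ V x)) x :=
    (EuclideanSpace.proj i : EuclideanSpace ℝ (Fin n) →L[ℝ] ℝ).hasFDerivAt.comp x
      (hV.differentiable one_ne_zero x).hasFDerivAt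
  rw [h.fderiv]
  simp [EuclideanSpace.inner_single_right]

lemma continuous_vecDiv {n : ℕ} {V : EuclideanSpace ℝ (Fin n) → EuclideanSpace ℝ (Fin n)}
    (hV : ContDiff ℝ 1 V) : Continuous (vecDiv V) := by
  unfold vecDiv
  refine continuous_finsetSum _ fun i _ => ?_
  exact ((hV.continuous_fderiv one_ne_zero).clm_apply continuous_const).inner continuous_const

lemma vecDiv_zero_of_notMem {n : ℕ} {V : EuclideanSpace ℝ (Fin n) → EuclideanSpace ℝ (Fin n)}
    {x : EuclideanSpace ℝ (Fin n)} (hx : x ∉ tsupport V) : vecDiv V x = 0 := by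
  unfold vecDiv
  rw [fderiv_of_notMem_tsupport ℝ hx]
  simp

lemma vecDiv_hasCompactSupport {n : ℕ} {V : EuclideanSpace ℝ (Fin n) → EuclideanSpace ℝ (Fin n)}
    (hV : HasCompactSupport V) : HasCompactSupport (vecDiv V) :=
  HasCompactSupport.intro hV.isCompact fun _ hx => vecDiv_zero_of_notMem hx

lemma integrable_vecDiv {n : ℕ} {V : EuclideanSpace ℝ (Fin n) → EuclideanSpace ℝ (Fin n)}
    (hV : ContDiff ℝ 1 V) (hVc : HasCompactSupport V) : Integrable (vecDiv V) :=
  (continuous_vecDiv hV).integrable_of_hasCompactSupport (vecDiv_hasCompactSupport hVc)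

lemma ibp {n : ℕ} {F : EuclideanSpace ℝ (Fin n) → ℝ}
    {V : EuclideanSpace ℝ (Fin n) → EuclideanSpace ℝ (Fin n)}
    (hF : ContDiff ℝ 1 F) (hV : ContDiff ℝ 1 V) (hVc : HasCompactSupport V) :
    ∫ x, F x * vecDiv V x = -∫ x, fderiv ℝ F x (V x) := by
  have hVi : ∀ i, ContDiff ℝ 1 (fun x => V x i) := fun i =>
    (EuclideanSpace.proj i : EuclideanSpace ℝ (Fin n) →L[ℝ] ℝ).contDiff.comp hV
  have hVic : ∀ i, HasCompactSupport (fun x => V x i) := fun i =>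
    hVc.comp_left (g := fun v : EuclideanSpace ℝ (Fin n) => v i) rfl
  have hdc : ∀ i, Continuous fun x => fderiv ℝ (fun x => V x i) x (EuclideanSpace.single i 1) :=
    fun i => ((hVi i).continuous_fderiv one_ne_zero).clm_apply continuous_const
  have hFc : ∀ i : Fin n, Continuous fun x => fderiv ℝ F x (EuclideanSpace.single i 1) :=
    fun i => (hF.continuous_fderiv one_ne_zero).clm_apply continuous_const
  have h1 : ∀ i, Integrable (fun x => F x * fderiv ℝ (fun x => V x i) x (EuclideanSpace.single i 1)) :=
    fun i => (hF.continuous.mul (hdc i)).integrable_of_hasCompactSupport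
      (((hVic i).fderiv_apply ℝ _).mul_left)
  have h2 : ∀ i, Integrable (fun x => fderiv ℝ F x (EuclideanSpace.single i 1) * V x i) :=
    fun i => ((hFc i).mul (hVi i).continuous).integrable_of_hasCompactSupport (hVic i).mul_left
  have h3 : ∀ i, Integrable (fun x => F x * V x i) :=
    fun i => (hF.continuous.mul (hVi i).continuous).integrable_of_hasCompactSupport (hVic i).mul_left
  have e1 : ∀ x, F x * vecDiv V x
      = ∑ i, F x * fderiv ℝ (fun x => V x i) x (EuclideanSpace.single i 1) := by
    intro x; rw [vecDiv_eq hV, Finset.mul_sum]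
  have e2 : ∀ x, fderiv ℝ F x (V x) = ∑ i, fderiv ℝ F x (EuclideanSpace.single i 1) * V x i := by
    intro x
    have : V x = ∑ i, V x i • EuclideanSpace.single i (1 : ℝ) := by
      ext j
      simp [Pi.single_apply]
    conv_lhs => rw [this]
    rw [map_sum]
    refine Finset.sum_congr rfl fun i _ => ?_
    rw [map_smul, smul_eq_mul, mul_comm]
  simp only [e1, e2]
  rw [integral_finsetSum _ (fun i _ => h1 i), integral_finsetSum _ (fun i _ => h2 i),
    ← Finset.sum_neg_distrib]
  refine Finset.sum_congr rfl fun i _ => ?_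
  exact integral_mul_fderiv_eq_neg_fderiv_mul_of_integrable (h2 i) (h1 i) (h3 i)
    (fun x _ => hF.differentiable one_ne_zero x) (fun x _ => (hVi i).differentiable one_ne_zero x)

lemma vecDiv_smul_const {n : ℕ} {η : EuclideanSpace ℝ (Fin n) → ℝ} (hη : ContDiff ℝ 1 η)
    (ν x : EuclideanSpace ℝ (Fin n)) : vecDiv (fun x => η x • ν) x = fderiv ℝ η x ν := by
  rw [vecDiv_eq (V := fun x => η x • ν) (hη.smul contDiff_const)]
  have : ν = ∑ i, ν i • EuclideanSpace.single i (1 : ℝ) := by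
    ext j
    simp [Pi.single_apply]
  conv_rhs => rw [this]
  rw [map_sum]
  refine Finset.sum_congr rfl fun i _ => ?_
  have h : HasFDerivAt (fun x => (η x • ν) i) (ν i • fderiv ℝ η x) x := by
    simpa [mul_comm] using (hη.differentiable one_ne_zero x).hasFDerivAt.mul_const (ν i)
  rw [h.fderiv, map_smul]
  rfl

/-- Passing to the limit in a smooth approximation of the indicator of `{g > 0}`. -/
lemma tendsto_smooth_indicator {n : ℕ} {g D : EuclideanSpace ℝ (Fin n) → ℝ}
    (hg : Continuous g) (hD : Integrable D) :
    Filter.Tendsto (fun k : ℕ => ∫ x, Real.smoothTransition (k * g x) * D x) Filter.atTop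
      (nhds (∫ x, {x | 0 < g x}.indicator D x)) := by
  refine tendsto_integral_of_dominated_convergence (fun x => ‖D x‖) (fun k => ?_) hD.norm
    (fun k => ae_of_all _ fun x => ?_) (ae_of_all _ fun x => ?_)
  · exact (Real.smoothTransition.continuous.comp
      (continuous_const.mul hg)).aestronglyMeasurable.mul hD.aestronglyMeasurable
  · rw [norm_mul, Real.norm_of_nonneg (Real.smoothTransition.nonneg _)]
    exact mul_le_of_le_one_left (norm_nonneg _) (Real.smoothTransition.le_one _)
  · by_cases h : 0 < g x
    · simp only [Set.indicator, Set.mem_ofPred_eq, h, if_true]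
      refine tendsto_const_nhds.congr' ?_
      obtain ⟨N, hN⟩ := exists_nat_ge (1 / g x)
      filter_upwards [Filter.eventually_ge_atTop N] with k hk
      rw [Real.smoothTransition.one_of_one_le, one_mul]
      have : (N : ℝ) ≤ k := by exact_mod_cast hk
      rw [div_le_iff₀ h] at hN
      nlinarith
    · simp only [Set.indicator, Set.mem_ofPred_eq, h, if_false]
      refine tendsto_const_nhds.congr fun k => ?_
      rw [Real.smoothTransition.zero_of_nonpos, zero_mul]
      exact mul_nonpos_of_nonneg_of_nonpos (by positivity) (not_lt.1 h)

lemma main_ineq {n : ℕ} {η g : EuclideanSpace ℝ (Fin n) → ℝ}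
    {U : EuclideanSpace ℝ (Fin n) → EuclideanSpace ℝ (Fin n)}
    {W : Set (EuclideanSpace ℝ (Fin n))} {ν : EuclideanSpace ℝ (Fin n)} {c : ℝ}
    (hη : ContDiff ℝ 1 η) (hηc : HasCompactSupport η) (hη0 : ∀ x, 0 ≤ η x)
    (hηW : tsupport η ⊆ W) (hg : ContDiff ℝ 1 g) (hU : ContDiff ℝ 1 U) (hU1 : ∀ x, ‖U x‖ ≤ 1)
    (hc : ∀ x ∈ W, ‖fderiv ℝ g x‖ ≤ c * fderiv ℝ g x ν) :
    ∫ x, {x | 0 < g x}.indicator (vecDiv (fun x => η x • U x)) x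
      ≤ c * (-∫ x, {x | 0 < g x}.indicator (fun x => fderiv ℝ η x ν) x) := by
  have hV : ContDiff ℝ 1 (fun x => η x • U x) := hη.smul hU
  have hVc : HasCompactSupport (fun x => η x • U x) := hηc.smul_right
  have hN : ContDiff ℝ 1 (fun x => η x • ν) := hη.smul contDiff_const
  have hNc : HasCompactSupport (fun x => η x • ν) := hηc.smul_right
  have hNe : (fun x => fderiv ℝ η x ν) = vecDiv (fun x => η x • ν) := by
    ext x; rw [vecDiv_smul_const hη]
  rw [hNe]
  refine le_of_tendsto_of_tendsto' (tendsto_smooth_indicator hg.continuous (integrable_vecDiv hV hVc))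
    ((tendsto_smooth_indicator hg.continuous (integrable_vecDiv hN hNc)).neg.const_mul c) fun k => ?_
  have hF : ContDiff ℝ 1 (fun x => Real.smoothTransition (k * g x)) :=
    (Real.smoothTransition.contDiff (n := 1)).comp (contDiff_const.mul hg)
  rw [ibp hF hV hVc, ibp hF hN hNc, neg_neg, ← integral_neg, ← integral_const_mul]
  have hFc := hF.continuous_fderiv one_ne_zero
  have hi : ∀ V : EuclideanSpace ℝ (Fin n) → EuclideanSpace ℝ (Fin n), Continuous V →
      HasCompactSupport V →
      Integrable (fun x => fderiv ℝ (fun x => Real.smoothTransition (k * g x)) x (V x)) := by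
    intro V hV hVc
    refine (hFc.clm_apply hV).integrable_of_hasCompactSupport ?_
    refine HasCompactSupport.intro hVc.isCompact fun x hx => ?_
    rw [image_eq_zero_of_notMem_tsupport hx, map_zero]
  refine integral_mono (hi _ hV.continuous hVc).neg ((hi _ hN.continuous hNc).const_mul c) fun x => ?_
  dsimp only
  have hd : fderiv ℝ (fun x => Real.smoothTransition (k * g x)) x
      = (deriv Real.smoothTransition (k * g x) * k) • fderiv ℝ g x := by
    have h1 : HasDerivAt Real.smoothTransition (deriv Real.smoothTransition (k * g x)) (k * g x) :=
      ((Real.smoothTransition.contDiff (n := 1)).differentiable one_ne_zero _).hasDerivAt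
    have h2 : HasFDerivAt (fun x => (k : ℝ) * g x) ((k : ℝ) • fderiv ℝ g x) x :=
      (hg.differentiable one_ne_zero x).hasFDerivAt.const_mul (k : ℝ)
    have := (h1.comp_hasFDerivAt x h2).fderiv
    rw [smul_smul] at this
    exact this
  have hnn : 0 ≤ deriv Real.smoothTransition (k * g x) * k :=
    mul_nonneg Real.smoothTransition.monotone.deriv_nonneg (by positivity)
  rw [hd]
  simp only [smul_apply, map_smul, smul_eq_mul]
  by_cases hx : x ∈ W
  · have h1 : -(fderiv ℝ g x (U x)) ≤ c * fderiv ℝ g x ν := by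
      refine le_trans ?_ (hc x hx)
      calc -(fderiv ℝ g x (U x)) ≤ ‖fderiv ℝ g x (U x)‖ := neg_le_abs _
        _ ≤ ‖fderiv ℝ g x‖ * ‖U x‖ := ContinuousLinearMap.le_opNorm _ _
        _ ≤ ‖fderiv ℝ g x‖ := mul_le_of_le_one_right (norm_nonneg _) (hU1 x)
    have h2 := mul_le_mul_of_nonneg_left h1 (mul_nonneg hnn (hη0 x))
    nlinarith [h2]
  · have : η x = 0 := image_eq_zero_of_notMem_tsupport (fun h => hx (hηW h))
    simp [this]

lemma mem_of_disjoint_frontier {X : Type*} [TopologicalSpace X] {E C : Set X}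
    (hC : IsPreconnected C) (hd : ∀ z ∈ C, z ∉ frontier E) {p q : X} (hp : p ∈ C) (hq : q ∈ C) :
    p ∈ E ↔ q ∈ E := by
  have key : ∀ p q : X, p ∈ C → q ∈ C → p ∈ E → q ∈ E := by
    intro p q hp hq hpE
    have hpi : p ∈ interior E := by
      by_contra h
      exact hd p hp ⟨subset_closure hpE, h⟩
    have hsub : C ⊆ interior E ∪ (closure E)ᶜ := by
      intro z hz
      by_cases h : z ∈ interior E
      · exact Or.inl h
      · exact Or.inr fun h' => hd z hz ⟨h', h⟩
    have hdis : Disjoint (interior E) (closure E)ᶜ :=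
      Set.disjoint_left.2 fun z hz hz' => hz' (subset_closure (interior_subset hz))
    exact interior_subset (hC.subset_left_of_subset_union isOpen_interior
      isClosed_closure.isOpen_compl hdis hsub ⟨p, hp, hpi⟩ hq)
  exact ⟨key p q hp hq, key q p hq hp⟩

lemma strict_along {n : ℕ} {g : EuclideanSpace ℝ (Fin n) → ℝ} {W : Set (EuclideanSpace ℝ (Fin n))}
    {ν : EuclideanSpace ℝ (Fin n)} (hg : ContDiff ℝ 1 g) (hW : Convex ℝ W)
    (hpos : ∀ x ∈ W, 0 < fderiv ℝ g x ν) (x : EuclideanSpace ℝ (Fin n)) (hx : x ∈ W) (s : ℝ)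
    (hs : 0 < s) (hxs : x + s • ν ∈ W) : g x < g (x + s • ν) := by
  have hd : ∀ t : ℝ, HasDerivAt (fun t : ℝ => g (x + t • ν)) (fderiv ℝ g (x + t • ν) ν) t := by
    intro t
    have h1 : HasDerivAt (fun t : ℝ => x + t • ν) ν t := by
      simpa using ((hasDerivAt_id t).smul_const ν).const_add x
    exact (hg.differentiable one_ne_zero _).hasFDerivAt.comp_hasDerivAt t h1
  obtain ⟨c, hc, hce⟩ := exists_hasDerivAt_eq_slope (fun t : ℝ => g (x + t • ν)) _ hs
    (fun t _ => (hd t).continuousAt.continuousWithinAt) (fun t _ => hd t)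
  have hcW : x + c • ν ∈ W := by
    have h := hW.add_smul_mem hx hxs (t := c / s)
      ⟨div_nonneg hc.1.le hs.le, (div_le_one hs).2 hc.2.le⟩
    rwa [smul_smul, div_mul_cancel₀ _ hs.ne'] at h
  have h2 := hpos _ hcW
  rw [hce] at h2
  have h3 := (div_pos_iff_of_pos_right (by linarith : (0 : ℝ) < s - 0)).1 h2
  simp only [zero_smul, add_zero] at h3
  linarith

lemma side {n : ℕ} {g : EuclideanSpace ℝ (Fin n) → ℝ} {E : Set (EuclideanSpace ℝ (Fin n))}
    {ν x₀ : EuclideanSpace ℝ (Fin n)} {R : ℝ} (hR : 0 < R) (hν : ‖ν‖ = 1) (hg : ContDiff ℝ 1 g)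
    (hpos : ∀ x ∈ Metric.ball x₀ R, 0 < fderiv ℝ g x ν) (hg0 : g x₀ = 0)
    (hF : ∀ x ∈ Metric.ball x₀ R, x ∈ frontier E → g x = 0) :
    ∃ ρ > 0, ∀ x ∈ Metric.ball x₀ ρ, 0 < g x → (x ∈ E ↔ x₀ + (R / 2) • ν ∈ E) := by
  set a := R / 2 with ha
  have ha0 : 0 < a := by positivity
  have hna : ‖a • ν‖ = a := by rw [norm_smul, hν, mul_one, Real.norm_of_nonneg ha0.le]
  have hs := strict_along hg (convex_ball x₀ R) hpos
  have htop : 0 < g (x₀ + a • ν) := by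
    rw [← hg0]
    refine hs x₀ (Metric.mem_ball_self hR) a ha0 ?_
    rw [mem_ball_iff_norm, add_sub_cancel_left, hna]; linarith
  obtain ⟨r, hr, hrb⟩ := Metric.isOpen_iff.1 (isOpen_lt continuous_const hg.continuous)
    (x₀ + a • ν) htop
  refine ⟨min r a, lt_min hr ha0, fun x hx hgx => ?_⟩
  have hxr : ‖x - x₀‖ < r := (mem_ball_iff_norm.1 hx).trans_le (min_le_left _ _)
  have hxa : ‖x - x₀‖ < a := (mem_ball_iff_norm.1 hx).trans_le (min_le_right _ _)
  have hline : ∀ t ∈ Set.Icc 0 a, x + t • ν ∈ Metric.ball x₀ R := by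
    intro t ht
    rw [mem_ball_iff_norm]
    calc ‖x + t • ν - x₀‖ = ‖(x - x₀) + t • ν‖ := by congr 1; abel
      _ ≤ ‖x - x₀‖ + ‖t • ν‖ := norm_add_le _ _
      _ = ‖x - x₀‖ + t := by rw [norm_smul, hν, mul_one, Real.norm_of_nonneg ht.1]
      _ < R := by linarith [ht.2]
  have h1 : x ∈ E ↔ x + a • ν ∈ E := by
    refine mem_of_disjoint_frontier (C := (fun t : ℝ => x + t • ν) '' Set.Icc 0 a)
      (isPreconnected_Icc.image _ (by fun_prop)) ?_ ⟨0, ⟨le_rfl, ha0.le⟩, by simp⟩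
      ⟨a, ⟨ha0.le, le_rfl⟩, rfl⟩
    rintro _ ⟨t, ht, rfl⟩ hfr
    have h0 := hF _ (hline t ht) hfr
    rcases ht.1.eq_or_lt with h | h
    · subst h
      simp at h0
      linarith
    · have := hs x (by simpa using hline 0 ⟨le_rfl, ha0.le⟩) t h (hline t ht)
      linarith
  have h2 : x + a • ν ∈ E ↔ x₀ + a • ν ∈ E := by
    refine mem_of_disjoint_frontier (C := Metric.ball (x₀ + a • ν) (min r a))
      (convex_ball _ _).isPreconnected ?_ ?_ (Metric.mem_ball_self (lt_min hr ha0))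
    · intro z hz hfr
      have hzr : z ∈ Metric.ball (x₀ + a • ν) r := Metric.ball_subset_ball (min_le_left _ _) hz
      have hza : ‖z - (x₀ + a • ν)‖ < a := (mem_ball_iff_norm.1 hz).trans_le (min_le_right _ _)
      have hzR : z ∈ Metric.ball x₀ R := by
        rw [mem_ball_iff_norm]
        calc ‖z - x₀‖ = ‖(z - (x₀ + a • ν)) + a • ν‖ := by congr 1; abel
          _ ≤ ‖z - (x₀ + a • ν)‖ + ‖a • ν‖ := norm_add_le _ _
          _ < R := by rw [hna]; linarith
      have h3 : 0 < g z := hrb hzr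
      have := hF z hzR hfr
      linarith
    · rw [mem_ball_iff_norm, add_sub_add_right_eq_sub]
      exact lt_min hxr hxa
  exact h1.trans h2

lemma one_side {m : ℕ} {η g : EuclideanSpace ℝ (Fin (m + 1)) → ℝ}
    {U : EuclideanSpace ℝ (Fin (m + 1)) → EuclideanSpace ℝ (Fin (m + 1))}
    {W F : Set (EuclideanSpace ℝ (Fin (m + 1)))} {ν : EuclideanSpace ℝ (Fin (m + 1))} {c : ℝ}
    (hc0 : 0 < c) (hν : ‖ν‖ = 1)
    (hη : ContDiff ℝ 1 η) (hηc : HasCompactSupport η) (hη0 : ∀ x, 0 ≤ η x)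
    (hW : Convex ℝ W) (hWo : IsOpen W)
    (hηW : tsupport η ⊆ W) (hg : ContDiff ℝ 1 g) (hU : ContDiff ℝ 1 U) (hU1 : ∀ x, ‖U x‖ ≤ 1)
    (hc : ∀ x ∈ W, ‖fderiv ℝ g x‖ < c * fderiv ℝ g x ν)
    (hF : ∀ x ∈ W, g x = 0 → x ∈ F) :
    ENNReal.ofReal (∫ x, {x | 0 < g x}.indicator (vecDiv (fun x => η x • U x)) x)
      ≤ ENNReal.ofReal c * ∫⁻ x in F, ENNReal.ofReal (η x) ∂μH[(m : ℝ)] := by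
  have hpos : ∀ x ∈ W, 0 < fderiv ℝ g x ν := fun x hx =>
    pos_of_mul_pos_right ((norm_nonneg _).trans_lt (hc x hx)) hc0.le
  refine (ENNReal.ofReal_le_ofReal
    (main_ineq hη hηc hη0 hηW hg hU hU1 fun x hx => (hc x hx).le)).trans ?_
  rw [ENNReal.ofReal_mul hc0.le]
  gcongr
  refine (layer_le hν hη hηc hη0 hW hWo hηW hg.continuous (strict_along hg hW hpos)).trans ?_
  exact lintegral_mono_set fun x hx => hF x hx.1 hx.2

lemma integral_vecDiv_eq_zero {n : ℕ} {V : EuclideanSpace ℝ (Fin n) → EuclideanSpace ℝ (Fin n)}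
    (hV : ContDiff ℝ 1 V) (hVc : HasCompactSupport V) : ∫ x, vecDiv V x = 0 := by
  have := ibp (F := fun _ => (1 : ℝ)) contDiff_const hV hVc
  simpa using this

lemma local_bound {m : ℕ} {E : Set (EuclideanSpace ℝ (Fin (m + 1)))} (hEm : MeasurableSet E)
    (hnull : volume (frontier E) = 0) {g : EuclideanSpace ℝ (Fin (m + 1)) → ℝ}
    {u : Set (EuclideanSpace ℝ (Fin (m + 1)))} (hu : IsOpen u)
    {x₀ : EuclideanSpace ℝ (Fin (m + 1))} (hx₀ : x₀ ∈ frontier E)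
    (hxu : x₀ ∈ u) (hg : ContDiff ℝ 1 g) (hgd : fderiv ℝ g x₀ ≠ 0)
    (hS : frontier E ∩ u = {y ∈ u | g y = 0}) {c : ℝ} (hc : 1 < c) :
    ∃ ρ > 0, ∀ η : EuclideanSpace ℝ (Fin (m + 1)) → ℝ,
      ∀ U : EuclideanSpace ℝ (Fin (m + 1)) → EuclideanSpace ℝ (Fin (m + 1)),
      ContDiff ℝ 1 η → (∀ x, 0 ≤ η x) → tsupport η ⊆ Metric.ball x₀ ρ →
      ContDiff ℝ 1 U → (∀ x, ‖U x‖ ≤ 1) →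
      ENNReal.ofReal (∫ x in E, vecDiv (fun x => η x • U x) x)
        ≤ ENNReal.ofReal c * ∫⁻ x in frontier E, ENNReal.ofReal (η x) ∂μH[(m : ℝ)] := by
  have hc0 : 0 < c := by linarith
  obtain ⟨ν, hν, hνA⟩ : ∃ ν : EuclideanSpace ℝ (Fin (m + 1)), ‖ν‖ = 1 ∧
      fderiv ℝ g x₀ ν = ‖fderiv ℝ g x₀‖ := by
    set A := fderiv ℝ g x₀ with hA
    set v := (InnerProductSpace.toDual ℝ (EuclideanSpace ℝ (Fin (m + 1)))).symm A with hv
    have hvn : ‖v‖ = ‖A‖ := LinearIsometryEquiv.norm_map _ _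
    have hA0 : ‖A‖ ≠ 0 := norm_ne_zero_iff.2 hgd
    refine ⟨‖A‖⁻¹ • v, ?_, ?_⟩
    · rw [norm_smul, hvn, norm_inv, norm_norm, inv_mul_cancel₀ hA0]
    · have : A v = ‖A‖ ^ 2 := by
        rw [← hvn, ← real_inner_self_eq_norm_sq v]
        exact (InnerProductSpace.toDual_symm_apply (𝕜 := ℝ) (x := v) (y := A)).symm
      rw [map_smul, this, smul_eq_mul]
      field_simp
  have hDc : Continuous (fderiv ℝ g) := hg.continuous_fderiv one_ne_zero
  have hopen : IsOpen {x | ‖fderiv ℝ g x‖ < c * fderiv ℝ g x ν} :=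
    isOpen_lt hDc.norm (continuous_const.mul (hDc.clm_apply continuous_const))
  obtain ⟨R, hR, hRb⟩ := Metric.isOpen_iff.1 (hopen.inter hu) x₀ ⟨by
    change ‖fderiv ℝ g x₀‖ < c * fderiv ℝ g x₀ ν
    rw [hνA]
    exact lt_mul_of_one_lt_left (norm_pos_iff.2 hgd) hc, hxu⟩
  have hcB : ∀ x ∈ Metric.ball x₀ R, ‖fderiv ℝ g x‖ < c * fderiv ℝ g x ν := fun x hx => (hRb hx).1
  have hpos : ∀ x ∈ Metric.ball x₀ R, 0 < fderiv ℝ g x ν := fun x hx =>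
    pos_of_mul_pos_right ((norm_nonneg _).trans_lt (hcB x hx)) hc0.le
  have hF : ∀ x ∈ Metric.ball x₀ R, (x ∈ frontier E ↔ g x = 0) := by
    intro x hx
    have hxu : x ∈ u := (hRb hx).2
    have := Set.ext_iff.1 hS x
    constructor
    · intro h; exact (this.1 ⟨h, hxu⟩).2
    · intro h; exact (this.2 ⟨hxu, h⟩).1
  have hg0 : g x₀ = 0 := (hF x₀ (Metric.mem_ball_self hR)).1 hx₀
  have hgn : ContDiff ℝ 1 (fun x => -g x) := hg.neg
  have hfn : ∀ x, fderiv ℝ (fun x => -g x) x = -fderiv ℝ g x := fun x => fderiv_fun_neg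
  have hνn : ‖-ν‖ = 1 := by rw [norm_neg, hν]
  obtain ⟨ρ₁, hρ₁, h₁⟩ := side (E := E) hR hν hg hpos hg0 (fun x hx h => (hF x hx).1 h)
  obtain ⟨ρ₂, hρ₂, h₂⟩ := side (E := E) (g := fun x => -g x) (ν := -ν) hR hνn hgn
    (fun x hx => by simpa [hfn] using hpos x hx) (by simp [hg0])
    (fun x hx h => by simp [(hF x hx).1 h])
  refine ⟨min R (min ρ₁ ρ₂), lt_min hR (lt_min hρ₁ hρ₂), fun η U hη hη0 hηW hU hU1 => ?_⟩
  set W := Metric.ball x₀ (min R (min ρ₁ ρ₂)) with hW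
  have hWR : W ⊆ Metric.ball x₀ R := Metric.ball_subset_ball (min_le_left _ _)
  have hW1 : W ⊆ Metric.ball x₀ ρ₁ :=
    Metric.ball_subset_ball ((min_le_right _ _).trans (min_le_left _ _))
  have hW2 : W ⊆ Metric.ball x₀ ρ₂ :=
    Metric.ball_subset_ball ((min_le_right _ _).trans (min_le_right _ _))
  have hηc : HasCompactSupport η :=
    Metric.isCompact_of_isClosed_isBounded (isClosed_tsupport η) (Metric.isBounded_ball.subset hηW)
  have hV : ContDiff ℝ 1 (fun x => η x • U x) := hη.smul hU
  have hVc : HasCompactSupport (fun x => η x • U x) := hηc.smul_right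
  set D := vecDiv (fun x => η x • U x) with hD
  have hD0 : ∀ x ∉ W, D x = 0 := fun x hx =>
    vecDiv_zero_of_notMem fun h => hx (hηW (tsupport_smul_subset_left η U h))
  rw [← integral_indicator hEm]
  have hae : ∀ᵐ x, x ∉ frontier E := measure_eq_zero_iff_ae_notMem.1 hnull
  have hcase : ∀ A : Set (EuclideanSpace ℝ (Fin (m + 1))),
      (∀ x ∈ W, g x ≠ 0 → (x ∈ E ↔ x ∈ A)) →
      ∫ x, E.indicator D x = ∫ x, A.indicator D x := by
    intro A hA
    refine integral_congr_ae ?_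
    filter_upwards [hae] with x hx
    by_cases hxW : x ∈ W
    · have := hA x hxW fun h => hx ((hF x (hWR hxW)).2 h)
      by_cases hxE : x ∈ E
      · rw [Set.indicator_of_mem hxE, Set.indicator_of_mem (this.1 hxE)]
      · rw [Set.indicator_of_notMem hxE, Set.indicator_of_notMem (fun h => hxE (this.2 h))]
    · simp [Set.indicator, hD0 x hxW]
  by_cases hp : x₀ + (R / 2) • ν ∈ E <;> by_cases hq : x₀ + (R / 2) • (-ν) ∈ E
  · rw [hcase Set.univ fun x hx h0 => ?_]
    · simp only [Set.indicator_univ]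
      rw [integral_vecDiv_eq_zero hV hVc]
      simp
    · rcases lt_or_gt_of_ne h0 with h | h
      · simp only [(h₂ x (hW2 hx) (by simpa using h)), hq, Set.mem_univ, Set.mem_empty_iff_false]
      · simp [(h₁ x (hW1 hx) h), hp]
  · rw [hcase {x | 0 < g x} fun x hx h0 => ?_]
    · exact one_side hc0 hν hη hηc hη0 (convex_ball _ _) Metric.isOpen_ball hηW hg hU hU1
        (fun x hx => hcB x (hWR hx)) (fun x hx h => (hF x (hWR hx)).2 h)
    · rcases lt_or_gt_of_ne h0 with h | h
      · simp only [(h₂ x (hW2 hx) (by simpa using h)), hq, Set.mem_ofPred_eq, h.not_gt]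
      · simp only [(h₁ x (hW1 hx) h), hp, Set.mem_ofPred_eq, h]
  · rw [hcase {x | 0 < -g x} fun x hx h0 => ?_]
    · exact one_side (g := fun x => -g x) hc0 hνn hη hηc hη0 (convex_ball _ _)
        Metric.isOpen_ball hηW hgn hU hU1
        (fun x hx => by simpa [hfn] using hcB x (hWR hx))
        (fun x hx h => (hF x (hWR hx)).2 (by simpa using h))
    · rcases lt_or_gt_of_ne h0 with h | h
      · simp only [(h₂ x (hW2 hx) (by simpa using h)), hq, Set.mem_ofPred_eq, neg_pos.2 h]
      · have : ¬ (0 < -g x) := by linarith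
        simp only [(h₁ x (hW1 hx) h), hp, Set.mem_ofPred_eq, this]
  · rw [hcase ∅ fun x hx h0 => ?_]
    · simp
    · rcases lt_or_gt_of_ne h0 with h | h
      · simp only [(h₂ x (hW2 hx) (by simpa using h)), hq, Set.mem_univ, Set.mem_empty_iff_false]
      · simp [(h₁ x (hW1 hx) h), hp]

lemma vecDiv_sum {n : ℕ} {ι : Type*} [Fintype ι]
    {V : ι → EuclideanSpace ℝ (Fin n) → EuclideanSpace ℝ (Fin n)}
    (hV : ∀ i, ContDiff ℝ 1 (V i)) (x : EuclideanSpace ℝ (Fin n)) :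
    vecDiv (fun x => ∑ i, V i x) x = ∑ i, vecDiv (V i) x := by
  unfold vecDiv
  rw [fderiv_fun_sum fun i _ => (hV i).differentiable one_ne_zero x, Finset.sum_comm]
  refine Finset.sum_congr rfl fun j _ => ?_
  rw [sum_apply, sum_inner]

lemma ofReal_sum_le' {ι : Type*} (s : Finset ι) (a : ι → ℝ) :
    ENNReal.ofReal (∑ i ∈ s, a i) ≤ ∑ i ∈ s, ENNReal.ofReal (a i) := by
  classical
  induction s using Finset.induction_on with
  | empty => simp
  | insert i s hi ih =>
    rw [Finset.sum_insert hi, Finset.sum_insert hi]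
    exact ENNReal.ofReal_add_le.trans (by gcongr)

lemma exists_pou {n : ℕ} {ι : Type} [Fintype ι] (O : ι → Set (EuclideanSpace ℝ (Fin n)))
    (hOo : ∀ i, IsOpen (O i)) (hOc : Set.univ ⊆ ⋃ i, O i) :
    ∃ f : ι → EuclideanSpace ℝ (Fin n) → ℝ, (∀ i, ContDiff ℝ 1 (f i)) ∧ (∀ i x, 0 ≤ f i x) ∧
      (∀ x, ∑ i, f i x = 1) ∧ ∀ i, tsupport (f i) ⊆ O i := by
  obtain ⟨f, hf⟩ := SmoothPartitionOfUnity.exists_isSubordinate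
    (modelWithCornersSelf ℝ (EuclideanSpace ℝ (Fin n))) isClosed_univ O hOo hOc
  refine ⟨fun i => f i, fun i => ?_, fun i x => f.nonneg i x, fun x => ?_, hf⟩
  · have h := (f i).contMDiff.contDiff
    exact h.of_le (by exact_mod_cast le_top)
  · rw [← finsum_eq_sum_of_fintype]
    exact f.sum_eq_one (Set.mem_univ x)

lemma hcs_smul {n : ℕ} {U : EuclideanSpace ℝ (Fin n) → EuclideanSpace ℝ (Fin n)}
    (hUc : HasCompactSupport U) (f : EuclideanSpace ℝ (Fin n) → ℝ) :
    HasCompactSupport (fun x => f x • U x) := by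
  refine HasCompactSupport.mono hUc fun x hx => ?_
  rw [Function.mem_support] at hx ⊢
  intro h
  rw [h, smul_zero] at hx
  exact hx rfl

lemma sum_bound {m : ℕ} {E : Set (EuclideanSpace ℝ (Fin (m + 1)))} {c : ℝ}
    {ι : Type} [Fintype ι] (f : ι → EuclideanSpace ℝ (Fin (m + 1)) → ℝ)
    (hfc : ∀ i, ContDiff ℝ 1 (f i)) (hf0 : ∀ i x, 0 ≤ f i x) (hf1 : ∀ x, ∑ i, f i x = 1)
    (U : EuclideanSpace ℝ (Fin (m + 1)) → EuclideanSpace ℝ (Fin (m + 1)))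
    (hU : ContDiff ℝ 1 U) (hUc : HasCompactSupport U)
    (hpiece : ∀ i, ENNReal.ofReal (∫ x in E, vecDiv (fun x => f i x • U x) x)
      ≤ ENNReal.ofReal c * ∫⁻ x in frontier E, ENNReal.ofReal (f i x) ∂μH[(m : ℝ)]) :
    ENNReal.ofReal (∫ x in E, vecDiv U x) ≤ ENNReal.ofReal c * μH[(m : ℝ)] (frontier E) := by
  have hVc : ∀ i, ContDiff ℝ 1 (fun x => f i x • U x) := fun i => (hfc i).smul hU
  have hVs : ∀ i, HasCompactSupport (fun x => f i x • U x) := fun i => hcs_smul hUc (f i)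
  have hUeq : (fun x => ∑ i, f i x • U x) = U := by
    funext z
    rw [← Finset.sum_smul, hf1, one_smul]
  have hdec : ∀ x, vecDiv U x = ∑ i, vecDiv (fun x => f i x • U x) x := by
    intro x
    have h := vecDiv_sum hVc x
    rw [hUeq] at h
    exact h
  have h1 : ∫ x in E, vecDiv U x = ∑ i, ∫ x in E, vecDiv (fun x => f i x • U x) x := by
    rw [← integral_finsetSum _ fun i _ => (integrable_vecDiv (hVc i) (hVs i)).integrableOn]
    exact integral_congr_ae (Filter.Eventually.of_forall hdec)
  have h2 : ∀ x, ∑ i, ENNReal.ofReal (f i x) = 1 := by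
    intro x
    rw [← ENNReal.ofReal_sum_of_nonneg fun i _ => hf0 i x, hf1, ENNReal.ofReal_one]
  have h3 : ∑ i, ∫⁻ x in frontier E, ENNReal.ofReal (f i x) ∂μH[(m : ℝ)]
      = μH[(m : ℝ)] (frontier E) := by
    rw [← lintegral_finsetSum _ fun i _ => (hfc i).continuous.measurable.ennreal_ofReal]
    simp only [h2, lintegral_one, Measure.restrict_apply_univ]
  rw [h1, ← h3, Finset.mul_sum]
  exact (ofReal_sum_le' _ _).trans (Finset.sum_le_sum fun i _ => hpiece i)

lemma exists_cover {m : ℕ} {E : Set (EuclideanSpace ℝ (Fin (m + 1)))} (hE : IsCompact E)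
    (hF : IsCompact (frontier E)) (ρ : EuclideanSpace ℝ (Fin (m + 1)) → ℝ) (hρ : ∀ x, 0 < ρ x) :
    ∃ (ι : Type) (_ : Fintype ι) (O : ι → Set (EuclideanSpace ℝ (Fin (m + 1)))),
      (∀ i, IsOpen (O i)) ∧ Set.univ ⊆ ⋃ i, O i ∧
      ∀ i, O i = interior E ∨ O i = Eᶜ ∨ ∃ x ∈ frontier E, O i = Metric.ball x (ρ x) := by
  obtain ⟨t, htF, htc⟩ := hF.elim_nhds_subcover (fun x => Metric.ball x (ρ x))
    fun x _ => Metric.ball_mem_nhds x (hρ x)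
  refine ⟨Option (Option t), inferInstance, fun i =>
    i.elim (interior E) fun j => j.elim Eᶜ fun x => Metric.ball x.1 (ρ x.1), ?_, ?_, ?_⟩
  · rintro (_ | _ | x)
    · exact isOpen_interior
    · exact hE.isClosed.isOpen_compl
    · exact Metric.isOpen_ball
  · intro x _
    rw [Set.mem_iUnion]
    by_cases h1 : x ∈ interior E
    · exact ⟨none, h1⟩
    by_cases h2 : x ∈ E
    · have h3 : x ∈ frontier E := ⟨subset_closure h2, h1⟩
      obtain ⟨y, hy, hxy⟩ := Set.mem_iUnion₂.1 (htc h3)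
      exact ⟨some (some ⟨y, hy⟩), hxy⟩
    · exact ⟨some none, h2⟩
  · rintro (_ | _ | x)
    · exact Or.inl rfl
    · exact Or.inr (Or.inl rfl)
    · exact Or.inr (Or.inr ⟨x.1, htF x.1 x.2, rfl⟩)

lemma exists_radius {m : ℕ} {E : Set (EuclideanSpace ℝ (Fin (m + 1)))} (hE : IsCompact E)
    (hbd : IsSmoothCompactHypersurface (frontier E)) (hnull : volume (frontier E) = 0)
    {c : ℝ} (hc : 1 < c) (x₀ : EuclideanSpace ℝ (Fin (m + 1))) :
    ∃ ρ > 0, x₀ ∈ frontier E →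
      ∀ η : EuclideanSpace ℝ (Fin (m + 1)) → ℝ,
      ∀ U : EuclideanSpace ℝ (Fin (m + 1)) → EuclideanSpace ℝ (Fin (m + 1)),
      ContDiff ℝ 1 η → (∀ x, 0 ≤ η x) → tsupport η ⊆ Metric.ball x₀ ρ →
      ContDiff ℝ 1 U → (∀ x, ‖U x‖ ≤ 1) →
      ENNReal.ofReal (∫ x in E, vecDiv (fun x => η x • U x) x)
        ≤ ENNReal.ofReal c * ∫⁻ x in frontier E, ENNReal.ofReal (η x) ∂μH[(m : ℝ)] := by
  by_cases hx : x₀ ∈ frontier E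
  · obtain ⟨g, u, hu, hxu, hg, hgd, hS⟩ := hbd.2 x₀ hx
    have hg1 : ContDiff ℝ 1 g := hg.of_le (by exact_mod_cast le_top)
    obtain ⟨ρ, hρ, h⟩ := local_bound hE.measurableSet hnull hu hx hxu hg1 (hgd x₀ hxu) hS hc
    exact ⟨ρ, hρ, fun _ => h⟩
  · exact ⟨1, one_pos, fun h => absurd h hx⟩

lemma field_bound_const {m : ℕ} {E : Set (EuclideanSpace ℝ (Fin (m + 1)))} (hE : IsCompact E)
    (hbd : IsSmoothCompactHypersurface (frontier E)) (hnull : volume (frontier E) = 0)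
    {c : ℝ} (hc : 1 < c)
    (U : EuclideanSpace ℝ (Fin (m + 1)) → EuclideanSpace ℝ (Fin (m + 1)))
    (hU : ContDiff ℝ 1 U) (hUc : HasCompactSupport U) (hU1 : ∀ x, ‖U x‖ ≤ 1) :
    ENNReal.ofReal (∫ x in E, vecDiv U x) ≤ ENNReal.ofReal c * μH[(m : ℝ)] (frontier E) := by
  choose ρ hρ hloc using exists_radius hE hbd hnull hc
  obtain ⟨ι, _, O, hOo, hOc, hO⟩ := exists_cover hE hbd.1 ρ hρ
  obtain ⟨f, hfc, hf0, hf1, hf⟩ := exists_pou O hOo hOc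
  refine sum_bound f hfc hf0 hf1 U hU hUc fun i => ?_
  have hts : tsupport (fun x => f i x • U x) ⊆ O i :=
    (tsupport_smul_subset_left (f i) U).trans (hf i)
  have hfi := hf i
  rcases hO i with h | h | ⟨x, hx, h⟩
  · rw [h] at hts
    have h0 : ∫ x in E, vecDiv (fun x => f i x • U x) x = 0 := by
      rw [setIntegral_eq_integral_of_forall_compl_eq_zero]
      · exact integral_vecDiv_eq_zero ((hfc i).smul hU) (hcs_smul hUc (f i))
      · intro x hx
        exact vecDiv_zero_of_notMem fun h => hx (interior_subset (hts h))
    rw [h0, ENNReal.ofReal_zero]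
    exact zero_le
  · rw [h] at hts
    have h0 : ∫ x in E, vecDiv (fun x => f i x • U x) x = 0 := by
      refine setIntegral_eq_zero_of_forall_eq_zero fun x hx => ?_
      exact vecDiv_zero_of_notMem fun h => (hts h) hx
    rw [h0, ENNReal.ofReal_zero]
    exact zero_le
  · rw [h] at hfi
    exact hloc x hx (f i) U (hfc i) (hf0 i) hfi hU hU1

lemma field_bound {m : ℕ} {E : Set (EuclideanSpace ℝ (Fin (m + 1)))} (hE : IsCompact E)
    (hbd : IsSmoothCompactHypersurface (frontier E))
    (U : EuclideanSpace ℝ (Fin (m + 1)) → EuclideanSpace ℝ (Fin (m + 1)))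
    (hU : ContDiff ℝ 1 U) (hUc : HasCompactSupport U) (hU1 : ∀ x, ‖U x‖ ≤ 1) :
    ENNReal.ofReal (∫ x in E, vecDiv U x) ≤ μH[(m : ℝ)] (frontier E) := by
  by_cases htop : μH[(m : ℝ)] (frontier E) = ∞
  · rw [htop]; exact le_top
  have hnull : volume (frontier E) = 0 := by
    have h := Measure.hausdorffMeasure_zero_or_top
      (show (m : ℝ) < ((m + 1 : ℕ) : ℝ) by push_cast; linarith) (frontier E)
    rcases h with h | h
    · exact le_antisymm ((volume_le_hausdorff _).trans h.le) zero_le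
    · exact absurd h htop
  rw [ENNReal.ofReal_le_iff_le_toReal htop]
  set M := (μH[(m : ℝ)] (frontier E)).toReal with hM
  set a := ∫ x in E, vecDiv U x with ha
  have hM0 : 0 ≤ M := ENNReal.toReal_nonneg
  have key : ∀ c : ℝ, 1 < c → a ≤ c * M := by
    intro c hc
    have h := field_bound_const hE hbd hnull hc U hU hUc hU1
    rw [ENNReal.ofReal_le_iff_le_toReal (ENNReal.mul_ne_top ENNReal.ofReal_ne_top htop),
      ENNReal.toReal_mul, ENNReal.toReal_ofReal (by linarith)] at h
    exact h
  by_contra hcon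
  push Not at hcon
  have hpos : 0 < (a - M) / (2 * (M + 1)) := div_pos (by linarith) (by linarith)
  have h := key (1 + (a - M) / (2 * (M + 1))) (by linarith)
  have h2 : (a - M) / (2 * (M + 1)) * (2 * (M + 1)) = a - M :=
    div_mul_cancel₀ _ (by linarith)
  nlinarith

/-- For every admissible test vector field `U`, `∫_E div U ≤ μH^{n−1}(∂E)`;
consequently `TV(χ_E) ≤ μH^{n−1}(∂E)`. -/
theorem totalVariation_indicator_le_hausdorff_boundary {n : ℕ} (hn : 2 ≤ n)
    (E : Set (EuclideanSpace ℝ (Fin n)))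
    (hE : IsCompact E) (hcl : E = closure (interior E))
    (hbd : IsSmoothCompactHypersurface (frontier E)) :
    (∀ U : EuclideanSpace ℝ (Fin n) → EuclideanSpace ℝ (Fin n),
      ContDiff ℝ 1 U → HasCompactSupport U → (∀ x, ‖U x‖ ≤ 1) →
      ENNReal.ofReal (∫ x in E, vecDiv U x) ≤ μH[(n : ℝ) - 1] (frontier E)) ∧
    totalVariation (E.indicator fun _ => (1 : ℝ)) ≤ μH[(n : ℝ) - 1] (frontier E) := by
  obtain ⟨m, rfl⟩ : ∃ m, n = m + 1 := ⟨n - 1, by omega⟩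
  have hdim : ((m + 1 : ℕ) : ℝ) - 1 = (m : ℝ) := by push_cast; ring
  rw [hdim]
  have h1 := field_bound hE hbd
  refine ⟨h1, ?_⟩
  unfold totalVariation
  refine iSup_le fun U => ?_
  refine le_trans (le_of_eq ?_) (h1 U.1 U.2.1 U.2.2.1 U.2.2.2)
  congr 1
  rw [← integral_indicator hE.measurableSet]
  congr 1
  ext x
  by_cases hx : x ∈ E <;> simp [hx]
end

section
/- Let X be a real inner product space, J : X → ℝ convex and absolutely one-homogeneous, and suppose u₀ ∈ X satisfies λ·u₀ ∈ ∂J(u₀) for some λ > 0. Then for every t > 0, the element u* = max(1 − t·λ, 0)·u₀ is a minimizer of E(u) = (1/(2t))·‖u − u₀‖² + J(u); i.e., the ROF problem applied to an eigenfunction merely rescales it, with extinction for t ≥ 1/λ. -/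
/-- The subdifferential `∂J(u) = {p | J(v) − J(u) ≥ ⟨p, v − u⟩ ∀ v}` of a functional `J`
on a real inner product space. -/
def subdiff {X : Type*} [NormedAddCommGroup X] [InnerProductSpace ℝ X]
    (J : X → ℝ) (u : X) : Set X :=
  {p | ∀ v, (inner ℝ p (v - u) : ℝ) ≤ J v - J u}

/-- If `J` is convex and absolutely one-homogeneous and `u₀` is a
generalized eigenfunction of `∂J` with eigenvalue `λ > 0`, then for every `t > 0` the
element `u* = max(1 − t·λ, 0)·u₀` minimizes `E(u) = (1/(2t))·‖u − u₀‖² + J(u)`. -/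
theorem rof_on_eigenfunction_rescales {X : Type*} [NormedAddCommGroup X]
    [InnerProductSpace ℝ X]
    (J : X → ℝ) (hconv : ConvexOn ℝ Set.univ J)
    (hhom : ∀ c : ℝ, ∀ u : X, J (c • u) = |c| * J u)
    (u₀ : X) (lam : ℝ) (hlam : 0 < lam) (heig : lam • u₀ ∈ subdiff J u₀)
    (t : ℝ) (ht : 0 < t) :
    ∀ u : X,
      (1 / (2 * t)) * ‖(max (1 - t * lam) 0) • u₀ - u₀‖ ^ 2 + J ((max (1 - t * lam) 0) • u₀)
        ≤ (1 / (2 * t)) * ‖u - u₀‖ ^ 2 + J u := by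
  intro u
  have key : ∀ v, lam * inner ℝ u₀ v - lam * ‖u₀‖ ^ 2 ≤ J v - J u₀ := by
    intro v
    have h := heig v
    rw [real_inner_smul_left, inner_sub_right, real_inner_self_eq_norm_sq] at h
    linarith
  have h0 := key ((0 : ℝ) • u₀)
  have h2 := key ((2 : ℝ) • u₀)
  rw [hhom, real_inner_smul_right, real_inner_self_eq_norm_sq] at h0 h2
  rw [abs_zero] at h0
  rw [abs_two] at h2
  have hJ : J u₀ = lam * ‖u₀‖ ^ 2 := by linarith
  have hu := key u
  have hnu := key ((-1 : ℝ) • u)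
  rw [hhom, real_inner_smul_right, abs_neg, abs_one] at hnu
  have hpos : 0 ≤ J u := by linarith
  have hlow : lam * inner ℝ u₀ u ≤ J u := by linarith
  have hq : ‖u - u₀‖ ^ 2 = ‖u‖ ^ 2 - 2 * inner ℝ u₀ u + ‖u₀‖ ^ 2 := by
    rw [norm_sub_sq_real, real_inner_comm]
  have ht2 : 1 / (2 * t) * (2 * t) = 1 := by field_simp
  have hc : 0 < 1 / (2 * t) := by positivity
  rw [hq]
  rcases le_total 0 (1 - t * lam) with h | h
  · rw [max_eq_left h, hhom, abs_of_nonneg h, hJ]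
    have e : (1 - t * lam) • u₀ - u₀ = (-(t * lam)) • u₀ := by
      rw [sub_smul, one_smul, neg_smul]; abel
    rw [e, norm_smul, mul_pow, Real.norm_eq_abs, sq_abs]
    have hs : 0 ≤ ‖u - (1 - t * lam) • u₀‖ ^ 2 := by positivity
    rw [norm_sub_sq_real, real_inner_smul_right, real_inner_comm, norm_smul, mul_pow,
      Real.norm_eq_abs, sq_abs] at hs
    refine le_of_mul_le_mul_left ?_ (show 0 < 2 * t by positivity)
    have hl := mul_le_mul_of_nonneg_left hlow (show 0 ≤ 2 * t by positivity)
    rw [mul_add, mul_add, ← mul_assoc, ← mul_assoc (2 * t) (1 / (2 * t)),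
      mul_comm (2 * t) (1 / (2 * t)), ht2]
    nlinarith
  · rw [max_eq_right h, hhom, abs_zero, zero_smul, zero_sub, norm_neg]
    have hi : inner ℝ u₀ u ≤ t * J u := by
      have h3 : lam * inner ℝ u₀ u ≤ lam * (t * J u) := by nlinarith
      exact le_of_mul_le_mul_left h3 hlam
    refine le_of_mul_le_mul_left ?_ (show 0 < 2 * t by positivity)
    rw [mul_add, mul_add, ← mul_assoc, ← mul_assoc (2 * t) (1 / (2 * t)),
      mul_comm (2 * t) (1 / (2 * t)), ht2]
    nlinarith [sq_nonneg ‖u‖]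
end

section
/- Let X be a real inner product space, J : X → ℝ convex and absolutely one-homogeneous, λ > 0, and u₀ ∈ X with λ·u₀ ∈ ∂J(u₀). Define u : [0,∞) → X by u(t) = max(1 − λ·t, 0)·u₀. Then u(0) = u₀; for every t ∈ (0, 1/λ), u is differentiable at t with derivative u'(t) = −λ·u₀ and −u'(t) = λ·u₀ ∈ ∂J(u(t)); and for every t > 1/λ, u(t) = 0, u is differentiable at t with u'(t) = 0, and 0 ∈ ∂J(u(t)). Hence u solves the gradient-flow inclusion u'(t) ∈ −∂J(u(t)) for all t ∈ (0,∞) except t = 1/λ, and u(t) = 0 for all t ≥ 1/λ. -/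
/-- Analytic solution of the gradient flow `u'(t) ∈ −∂J(u(t))` on a
generalized eigenfunction `u₀` (with `λ·u₀ ∈ ∂J(u₀)`, `λ > 0`) of a convex, absolutely
one-homogeneous functional `J`: the function `u(t) = max(1 − λ·t, 0)·u₀` satisfies
`u(0) = u₀`; on `(0, 1/λ)` it is differentiable with `u'(t) = −λ·u₀` and
`−u'(t) = λ·u₀ ∈ ∂J(u(t))`; for `t > 1/λ` it vanishes, has derivative `0`, and
`0 ∈ ∂J(u(t))`; hence it solves the flow inclusion for all `t > 0` except `t = 1/λ`,
and `u(t) = 0` for all `t ≥ 1/λ`. -/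
theorem tv_flow_on_eigenfunction {X : Type*} [NormedAddCommGroup X]
    [InnerProductSpace ℝ X]
    (J : X → ℝ) (hconv : ConvexOn ℝ Set.univ J)
    (hhom : ∀ c : ℝ, ∀ v : X, J (c • v) = |c| * J v)
    (u₀ : X) (lam : ℝ) (hlam : 0 < lam) (heig : lam • u₀ ∈ subdiff J u₀)
    (u : ℝ → X) (hu : ∀ t : ℝ, u t = max (1 - lam * t) 0 • u₀) :
    u 0 = u₀ ∧
    (∀ t ∈ Set.Ioo (0 : ℝ) (1 / lam),
      HasDerivAt u (-(lam • u₀)) t ∧ lam • u₀ ∈ subdiff J (u t)) ∧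
    (∀ t : ℝ, 1 / lam < t →
      u t = 0 ∧ HasDerivAt u 0 t ∧ (0 : X) ∈ subdiff J (u t)) ∧
    (∀ t : ℝ, 0 < t → t ≠ 1 / lam →
      ∃ d : X, HasDerivAt u d t ∧ -d ∈ subdiff J (u t)) ∧
    (∀ t : ℝ, 1 / lam ≤ t → u t = 0) := by
  have hJ0 : J 0 = 0 := by simpa using hhom 0 0
  have hnonneg : ∀ v, 0 ≤ J v := by
    intro v
    have h := hconv.2 (Set.mem_univ v) (Set.mem_univ (-v))
      (show (0 : ℝ) ≤ 1 / 2 by norm_num) (show (0 : ℝ) ≤ 1 / 2 by norm_num) (by norm_num)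
    have hneg : J (-v) = J v := by simpa using hhom (-1) v
    rw [smul_neg, add_neg_cancel, hJ0, hneg, smul_eq_mul] at h
    linarith
  have hzero : ∀ t : ℝ, 1 / lam ≤ t → u t = 0 := by
    intro t ht
    have h : 1 ≤ lam * t := by
      rw [div_le_iff₀ hlam] at ht
      linarith
    rw [hu, max_eq_right (by linarith), zero_smul]
  have hA : ∀ t ∈ Set.Ioo (0 : ℝ) (1 / lam),
      HasDerivAt u (-(lam • u₀)) t ∧ lam • u₀ ∈ subdiff J (u t) := by
    intro t ht
    have hlt : ∀ s : ℝ, s < 1 / lam → 0 < 1 - lam * s := by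
      intro s hs
      rw [lt_div_iff₀ hlam] at hs
      linarith
    constructor
    · have h1 : HasDerivAt (fun s : ℝ => (1 - lam * s) • u₀) (-(lam • u₀)) t := by
        have h2 : HasDerivAt (fun s : ℝ => 1 - lam * s) (-lam) t := by
          simpa using ((hasDerivAt_id t).const_mul lam).const_sub 1
        simpa using h2.smul_const u₀
      refine h1.congr_of_eventuallyEq ?_
      filter_upwards [Iio_mem_nhds ht.2] with s hs
      rw [hu, max_eq_left (hlt s hs).le]
    · intro v
      have hc := hlt t ht.2
      rw [hu, max_eq_left hc.le]
      generalize 1 - lam * t = c at hc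
      have h := heig (c⁻¹ • v)
      have hv : v - c • u₀ = c • (c⁻¹ • v - u₀) := by
        rw [smul_sub, smul_inv_smul₀ hc.ne']
      have hJv : J v = c * J (c⁻¹ • v) := by
        rw [hhom, abs_of_pos (inv_pos.mpr hc), mul_inv_cancel_left₀ hc.ne']
      rw [hv, real_inner_smul_right, hJv, hhom c u₀, abs_of_pos hc, ← mul_sub]
      exact mul_le_mul_of_nonneg_left h hc.le
  have hB : ∀ t : ℝ, 1 / lam < t →
      u t = 0 ∧ HasDerivAt u 0 t ∧ (0 : X) ∈ subdiff J (u t) := by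
    intro t ht
    refine ⟨hzero t ht.le, ?_, ?_⟩
    · refine (hasDerivAt_const t (0 : X)).congr_of_eventuallyEq ?_
      filter_upwards [Ioi_mem_nhds ht] with s hs
      exact hzero s (le_of_lt hs)
    · intro v
      rw [hzero t ht.le, hJ0, inner_zero_left, sub_zero]
      exact hnonneg v
  refine ⟨by simp [hu], hA, hB, ?_, hzero⟩
  intro t ht hne
  rcases lt_or_gt_of_ne hne with h | h
  · exact ⟨_, (hA t ⟨ht, h⟩).1, by simpa using (hA t ⟨ht, h⟩).2⟩
  · exact ⟨0, (hB t h).2.1, by simpa using (hB t h).2.2⟩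
end

section
/- Let X be a real inner product space, J : X → ℝ convex, u₀ ∈ X, t > 0, and k ∈ X a vector such that J(u + c·k) = J(u) for all u ∈ X and all c ∈ ℝ. If u* minimizes E(u) = (1/2)·‖u − u₀‖² + t·J(u) over X, then ⟨u*, k⟩ = ⟨u₀, k⟩. -/
/-- If `J` is convex and invariant in the direction `k`
(`J(u + c·k) = J(u)` for all `u, c`), then any minimizer `u*` of
`E(u) = (1/2)·‖u − u₀‖² + t·J(u)` satisfies `⟨u*, k⟩ = ⟨u₀, k⟩`
(e.g. the ROF step preserves the mean). -/
theorem rof_min_preserves_invariant_component {X : Type*} [NormedAddCommGroup X]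
    [InnerProductSpace ℝ X]
    (J : X → ℝ) (hconv : ConvexOn ℝ Set.univ J)
    (u₀ k : X) (t : ℝ) (ht : 0 < t)
    (hk : ∀ (u : X) (c : ℝ), J (u + c • k) = J u)
    (ustar : X)
    (hmin : ∀ v : X,
      (1 / 2) * ‖ustar - u₀‖ ^ 2 + t * J ustar ≤ (1 / 2) * ‖v - u₀‖ ^ 2 + t * J v) :
    (inner ℝ ustar k : ℝ) = (inner ℝ u₀ k : ℝ) := by
  have key : ∀ c : ℝ, 0 ≤ c * inner ℝ (ustar - u₀) k + c ^ 2 * ‖k‖ ^ 2 / 2 := by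
    intro c
    have h := hmin (ustar + c • k)
    rw [hk, show ustar + c • k - u₀ = (ustar - u₀) + c • k by abel,
      norm_add_sq_real, real_inner_smul_right, norm_smul, mul_pow, Real.norm_eq_abs,
      sq_abs] at h
    linarith
  have hN : 0 ≤ ‖k‖ ^ 2 := by positivity
  rw [← sub_eq_zero, ← inner_sub_left]
  generalize (inner ℝ (ustar - u₀) k : ℝ) = a at key ⊢
  generalize ‖k‖ ^ 2 = N at key hN
  obtain ⟨d, hd⟩ : ∃ d, a = d * (N + 1) := ⟨a / (N + 1), by field_simp⟩
  have h := key (-d)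
  have hd2 : d ^ 2 = 0 := by
    subst hd
    nlinarith [sq_nonneg d, mul_nonneg (sq_nonneg d) hN]
  have hd0 : d = 0 := by simpa using hd2
  rw [hd, hd0, zero_mul]
end
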